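/- Let θ ∈ C²([a,b],ℝ) satisfy θ''(s) + V'(θ(s)) = 0 for all s ∈ [a,b], with V'(θ(a)) ≠ 0 and V'(θ(b)) ≠ 0. Define ξ(s) = θ'(s)·V'(θ(s)) and β = ξ(a) − ξ(b). If β ≤ 0, then there exists a Neumann-admissible perturbation τ with ∫_a^b (τ'(s)² − V''(θ(s))·τ(s)²) ds < 0. -/

import Mathlib

/-!
Along a stationary solution, `u = θ'` solves the Jacobi equation `u'' + V''(θ) u = 0`, so an
integration by parts gives `Q[u + εψ] = [u u'] + 2ε [u' ψ] + ε² Q[ψ]`, where `[·]` is the increment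
over `[a, b]`. The first term is `β ≤ 0`, and `ψ` can be chosen with `[u' ψ] < 0` because `u'` does
not vanish at both endpoints; hence `Q[u + εψ] < 0` for small `ε > 0`. The Neumann condition is then
free: endpoint slopes can be corrected by boundary layers that do not affect `Q` in the limit.
-/

open Set Filter MeasureTheory Topology

/-- The second variation `∫ₐᵇ (τ'² - q τ²)` with potential `q`. The derivative `τ'` is passed
separately, so that its endpoint values do not refer to `deriv`. -/
noncomputable def secondVariation (q τ τ' : ℝ → ℝ) (a b : ℝ) : ℝ :=
  ∫ s in a..b, (τ' s ^ 2 - q s * τ s ^ 2)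

/-- `u` is a Jacobi field on `S` for the potential `q`, with derivative `u'`: it solves the
linearized equation `u'' + q u = 0` at every point of `S`. -/
structure IsJacobiField (q u u' : ℝ → ℝ) (S : Set ℝ) : Prop where
  hasDerivAt : ∀ s ∈ S, HasDerivAt u (u' s) s
  hasDerivAt_deriv : ∀ s ∈ S, HasDerivAt u' (-(q s * u s)) s

/-- A profile on `[a, b]` with value `m` at `a` and `n` at `b` that concentrates at the endpoints as
`k → ∞`; it is added to a derivative to correct its endpoint values. -/
noncomputable def boundaryLayer (a b m n : ℝ) (k : ℕ) (s : ℝ) : ℝ :=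
  m * ((b - s) / (b - a)) ^ k + n * ((s - a) / (b - a)) ^ k

/-- The antiderivative of `boundaryLayer a b m n k` that tends to zero as `k → ∞`; the sign of `m`
flips because `(b - s) / (b - a)` is decreasing in `s`. -/
noncomputable def boundaryLayerPrimitive (a b m n : ℝ) (k : ℕ) (s : ℝ) : ℝ :=
  (b - a) / (k + 1 : ℕ) * boundaryLayer a b (-m) n (k + 1) s

section SecondVariation

variable {q τ τ' : ℝ → ℝ} {a b : ℝ}

lemma intervalIntegrable_secondVariation (hq : IntervalIntegrable q volume a b)
    (hτ : ContinuousOn τ (uIcc a b)) (hτ' : ContinuousOn τ' (uIcc a b)) :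
    IntervalIntegrable (fun s ↦ τ' s ^ 2 - q s * τ s ^ 2) volume a b :=
  (hτ'.pow 2).intervalIntegrable.sub (hq.mul_continuousOn (hτ.pow 2))

lemma secondVariation_const_mul (c : ℝ) :
    secondVariation q (fun s ↦ c * τ s) (fun s ↦ c * τ' s) a b =
      c ^ 2 * secondVariation q τ τ' a b := by
  simp only [secondVariation, ← intervalIntegral.integral_const_mul]
  congr 1 with s
  ring

lemma exists_ne_zero_of_secondVariation_neg (hab : a ≤ b)
    (hneg : secondVariation q τ τ' a b < 0) : ∃ s ∈ Icc a b, τ s ≠ 0 := by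
  by_contra! hzero
  refine hneg.not_ge (intervalIntegral.integral_nonneg hab fun s hs ↦ ?_)
  simpa [hzero s hs] using sq_nonneg (τ' s)

lemma tendsto_secondVariation {ι : Type*} {l : Filter ι} [l.IsCountablyGenerated]
    {σ σ' : ι → ℝ → ℝ} {C C' : ℝ} (hq : IntervalIntegrable q volume a b)
    (hσ_cont : ∀ i, ContinuousOn (σ i) (uIcc a b))
    (hσ'_cont : ∀ i, ContinuousOn (σ' i) (uIcc a b))
    (hσ_le : ∀ i, ∀ s ∈ uIcc a b, |σ i s| ≤ C) (hσ'_le : ∀ i, ∀ s ∈ uIcc a b, |σ' i s| ≤ C')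
    (hσ : ∀ᵐ s, s ∈ uIoc a b → Tendsto (σ · s) l (𝓝 (τ s)))
    (hσ' : ∀ᵐ s, s ∈ uIoc a b → Tendsto (σ' · s) l (𝓝 (τ' s))) :
    Tendsto (fun i ↦ secondVariation q (σ i) (σ' i) a b) l (𝓝 (secondVariation q τ τ' a b)) := by
  refine intervalIntegral.tendsto_integral_filter_of_dominated_convergence
    (fun s ↦ C' ^ 2 + |q s| * C ^ 2) (.of_forall fun i ↦ ?_) (.of_forall fun i ↦ ?_) ?_ ?_
  · exact (intervalIntegrable_secondVariation hq (hσ_cont i)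
      (hσ'_cont i)).aestronglyMeasurable_restrict_uIoc
  · refine .of_forall fun s hs ↦ ?_
    have hs' := uIoc_subset_uIcc hs
    calc ‖σ' i s ^ 2 - q s * σ i s ^ 2‖
        ≤ ‖σ' i s ^ 2‖ + ‖q s * σ i s ^ 2‖ := norm_sub_le _ _
      _ = |σ' i s| ^ 2 + |q s| * |σ i s| ^ 2 := by simp only [norm_mul, norm_pow, Real.norm_eq_abs]
      _ ≤ C' ^ 2 + |q s| * C ^ 2 := by
        gcongr
        exacts [hσ'_le i s hs', hσ_le i s hs']
  · exact intervalIntegrable_const.add (hq.abs.mul_const _)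
  · filter_upwards [hσ, hσ'] with s h h' hs
    exact ((h' hs).pow 2).sub (((h hs).pow 2).const_mul _)

end SecondVariation

section BoundaryLayer

variable {a b s : ℝ} (m n : ℝ)

lemma boundaryLayer_left (hab : a ≠ b) {k : ℕ} (hk : k ≠ 0) : boundaryLayer a b m n k a = m := by
  simp [boundaryLayer, hk, sub_ne_zero.2 hab.symm]

lemma boundaryLayer_right (hab : a ≠ b) {k : ℕ} (hk : k ≠ 0) : boundaryLayer a b m n k b = n := by
  simp [boundaryLayer, hk, sub_ne_zero.2 hab.symm]

lemma continuous_boundaryLayer (k : ℕ) : Continuous (boundaryLayer a b m n k) := by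
  unfold boundaryLayer
  fun_prop

lemma abs_boundaryLayer_le (k : ℕ) (hs : s ∈ Icc a b) :
    |boundaryLayer a b m n k s| ≤ |m| + |n| := by
  have hba : 0 ≤ b - a := sub_nonneg.2 (hs.1.trans hs.2)
  have hleft : |(b - s) / (b - a)| ≤ 1 := by
    rw [abs_of_nonneg (div_nonneg (sub_nonneg.2 hs.2) hba)]
    exact div_le_one_of_le₀ (by linarith [hs.1]) hba
  have hright : |(s - a) / (b - a)| ≤ 1 := by
    rw [abs_of_nonneg (div_nonneg (sub_nonneg.2 hs.1) hba)]
    exact div_le_one_of_le₀ (by linarith [hs.2]) hba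
  calc |boundaryLayer a b m n k s|
      ≤ |m| * |(b - s) / (b - a)| ^ k + |n| * |(s - a) / (b - a)| ^ k := by
        simpa only [boundaryLayer, abs_mul, abs_pow] using
          abs_add_le (m * ((b - s) / (b - a)) ^ k) (n * ((s - a) / (b - a)) ^ k)
    _ ≤ |m| * 1 + |n| * 1 := by
        gcongr
        exacts [pow_le_one₀ (abs_nonneg _) hleft, pow_le_one₀ (abs_nonneg _) hright]
    _ = |m| + |n| := by simp only [mul_one]

lemma tendsto_boundaryLayer (hs : s ∈ Ioo a b) :
    Tendsto (boundaryLayer a b m n · s) atTop (𝓝 0) := by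
  have hba : 0 < b - a := sub_pos.2 (hs.1.trans hs.2)
  have hleft : Tendsto (fun k : ℕ ↦ ((b - s) / (b - a)) ^ k) atTop (𝓝 0) :=
    tendsto_pow_atTop_nhds_zero_of_lt_one (div_nonneg (sub_nonneg.2 hs.2.le) hba.le)
      ((div_lt_one hba).2 (sub_lt_sub_left hs.1 b))
  have hright : Tendsto (fun k : ℕ ↦ ((s - a) / (b - a)) ^ k) atTop (𝓝 0) :=
    tendsto_pow_atTop_nhds_zero_of_lt_one (div_nonneg (sub_nonneg.2 hs.1.le) hba.le)
      ((div_lt_one hba).2 (sub_lt_sub_right hs.2 a))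
  simpa [boundaryLayer] using (hleft.const_mul m).add (hright.const_mul n)

lemma hasDerivAt_boundaryLayerPrimitive (hab : a ≠ b) (k : ℕ) (s : ℝ) :
    HasDerivAt (boundaryLayerPrimitive a b m n k) (boundaryLayer a b m n k s) s := by
  have hba : b - a ≠ 0 := sub_ne_zero.2 hab.symm
  have hleft : HasDerivAt (fun t ↦ (b - t) / (b - a)) (-1 / (b - a)) s :=
    ((hasDerivAt_id s).const_sub b).div_const _
  have hright : HasDerivAt (fun t ↦ (t - a) / (b - a)) (1 / (b - a)) s :=
    ((hasDerivAt_id s).sub_const a).div_const _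
  refine ((((hleft.pow (k + 1)).const_mul (-m)).add ((hright.pow (k + 1)).const_mul n)).const_mul
    ((b - a) / (k + 1 : ℕ))).congr_deriv ?_
  simp only [boundaryLayer, Nat.add_sub_cancel]
  push_cast
  field_simp

lemma abs_boundaryLayerPrimitive_le (k : ℕ) (hs : s ∈ Icc a b) :
    |boundaryLayerPrimitive a b m n k s| ≤ (b - a) * (|m| + |n|) := by
  have hba : 0 ≤ b - a := sub_nonneg.2 (hs.1.trans hs.2)
  have hscale : (b - a) / (k + 1 : ℕ) ≤ b - a :=
    div_le_self hba (mod_cast Nat.le_add_left 1 k)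
  rw [boundaryLayerPrimitive, abs_mul, abs_of_nonneg (by positivity), ← abs_neg m]
  exact mul_le_mul hscale (abs_boundaryLayer_le (-m) n (k + 1) hs) (abs_nonneg _) hba

lemma tendsto_boundaryLayerPrimitive (hs : s ∈ Ioo a b) :
    Tendsto (boundaryLayerPrimitive a b m n · s) atTop (𝓝 0) := by
  have h := (tendsto_const_div_atTop_nhds_zero_nat (b - a)).mul (tendsto_boundaryLayer (-m) n hs)
  rw [mul_zero] at h
  exact h.comp (tendsto_add_atTop_nat 1)

end BoundaryLayer

lemma tendsto_secondVariation_add_boundaryLayer {q τ τ' : ℝ → ℝ} {a b : ℝ} (m n : ℝ) (hab : a < b)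
    (hq : IntervalIntegrable q volume a b) (hτ : ContinuousOn τ (Icc a b))
    (hτ' : ContinuousOn τ' (Icc a b)) :
    Tendsto (fun k ↦ secondVariation q (fun s ↦ τ s + boundaryLayerPrimitive a b m n k s)
      (fun s ↦ τ' s + boundaryLayer a b m n k s) a b) atTop (𝓝 (secondVariation q τ τ' a b)) := by
  obtain ⟨C, hC⟩ := isCompact_Icc.exists_bound_of_continuousOn hτ
  obtain ⟨C', hC'⟩ := isCompact_Icc.exists_bound_of_continuousOn hτ'
  have hinterior : ∀ᵐ s, s ∈ uIoc a b → s ∈ Ioo a b := by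
    filter_upwards [volume.ae_ne b] with s hsb hs
    rw [uIoc_of_le hab.le] at hs
    exact ⟨hs.1, hs.2.lt_of_ne hsb⟩
  have hprim_cont (k : ℕ) : Continuous (boundaryLayerPrimitive a b m n k) :=
    continuous_iff_continuousAt.2 fun s ↦
      (hasDerivAt_boundaryLayerPrimitive m n hab.ne k s).continuousAt
  rw [← uIcc_of_le hab.le] at hτ hτ'
  refine tendsto_secondVariation (C := C + (b - a) * (|m| + |n|)) (C' := C' + (|m| + |n|)) hq
    (fun k ↦ hτ.add (hprim_cont k).continuousOn)
    (fun k ↦ hτ'.add (continuous_boundaryLayer m n k).continuousOn)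
    (fun k s hs ↦ ?_) (fun k s hs ↦ ?_) ?_ ?_
  · rw [uIcc_of_le hab.le] at hs
    exact (abs_add_le _ _).trans (add_le_add (hC s hs) (abs_boundaryLayerPrimitive_le m n k hs))
  · rw [uIcc_of_le hab.le] at hs
    exact (abs_add_le _ _).trans (add_le_add (hC' s hs) (abs_boundaryLayer_le m n k hs))
  · filter_upwards [hinterior] with s hs hs'
    simpa using (tendsto_boundaryLayerPrimitive m n (hs hs')).const_add (τ s)
  · filter_upwards [hinterior] with s hs hs'
    simpa using (tendsto_boundaryLayer m n (hs hs')).const_add (τ' s)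

lemma exists_neumann_secondVariation_neg {q τ τ' : ℝ → ℝ} {a b : ℝ} (hab : a < b)
    (hq : IntervalIntegrable q volume a b) (hτ : ∀ s ∈ Icc a b, HasDerivAt τ (τ' s) s)
    (hτ' : ContinuousOn τ' (Icc a b)) (hneg : secondVariation q τ τ' a b < 0) :
    ∃ σ σ' : ℝ → ℝ, (∀ s ∈ Icc a b, HasDerivAt σ (σ' s) s) ∧ ContinuousOn σ' (Icc a b) ∧
      σ' a = 0 ∧ σ' b = 0 ∧ secondVariation q σ σ' a b < 0 := by
  have hlim := tendsto_secondVariation_add_boundaryLayer (-τ' a) (-τ' b) hab hq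
    (HasDerivAt.continuousOn hτ) hτ'
  obtain ⟨k, hk, hk0⟩ := ((hlim.eventually_lt_const hneg).and (eventually_ne_atTop 0)).exists
  refine ⟨_, _, fun s hs ↦ (hτ s hs).add (hasDerivAt_boundaryLayerPrimitive _ _ hab.ne k s),
    hτ'.add (continuous_boundaryLayer _ _ k).continuousOn, ?_, ?_, hk⟩
  · rw [boundaryLayer_left _ _ hab.ne hk0, add_neg_cancel]
  · rw [boundaryLayer_right _ _ hab.ne hk0, add_neg_cancel]

lemma exists_two_mul_add_sq_mul_neg {c : ℝ} (hc : c < 0) (d : ℝ) :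
    ∃ ε : ℝ, 2 * (ε * c) + ε ^ 2 * d < 0 := by
  have hlim : Tendsto (fun ε : ℝ ↦ 2 * c + ε * d) (𝓝[>] 0) (𝓝 (2 * c + 0 * d)) :=
    tendsto_nhdsWithin_of_tendsto_nhds (Continuous.tendsto (by fun_prop) 0)
  obtain ⟨ε, hε_neg, hε⟩ :=
    ((hlim.eventually_lt_const (u := 0) (by linarith)).and self_mem_nhdsWithin).exists
  refine ⟨ε, ?_⟩
  calc 2 * (ε * c) + ε ^ 2 * d = ε * (2 * c + ε * d) := by ring
    _ < 0 := mul_neg_of_pos_of_neg hε hε_neg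

namespace IsJacobiField

variable {q u u' φ φ' : ℝ → ℝ} {a b : ℝ}

lemma secondVariation_add (hu : IsJacobiField q u u' (uIcc a b))
    (hq : IntervalIntegrable q volume a b) (hφ : ∀ s ∈ uIcc a b, HasDerivAt φ (φ' s) s)
    (hφ' : ContinuousOn φ' (uIcc a b)) :
    secondVariation q (fun s ↦ u s + φ s) (fun s ↦ u' s + φ' s) a b =
      (u' b * u b - u' a * u a) + 2 * (u' b * φ b - u' a * φ a) + secondVariation q φ φ' a b := by
  have hu_cont : ContinuousOn u (uIcc a b) := HasDerivAt.continuousOn hu.hasDerivAt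
  have hu'_cont : ContinuousOn u' (uIcc a b) := HasDerivAt.continuousOn hu.hasDerivAt_deriv
  have hφ_cont : ContinuousOn φ (uIcc a b) := HasDerivAt.continuousOn hφ
  have hderiv : ∀ s ∈ uIcc a b, HasDerivAt (fun s ↦ u' s * (u s + 2 * φ s))
      (-(q s * u s) * (u s + 2 * φ s) + u' s * (u' s + 2 * φ' s)) s := fun s hs ↦
    (hu.hasDerivAt_deriv s hs).mul ((hu.hasDerivAt s hs).add ((hφ s hs).const_mul 2))
  have hint : IntervalIntegrable
      (fun s ↦ -(q s * u s) * (u s + 2 * φ s) + u' s * (u' s + 2 * φ' s)) volume a b :=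
    ((hq.mul_continuousOn hu_cont).neg.mul_continuousOn (by fun_prop)).add
      (ContinuousOn.intervalIntegrable (by fun_prop))
  calc secondVariation q (fun s ↦ u s + φ s) (fun s ↦ u' s + φ' s) a b
      = ∫ s in a..b, ((-(q s * u s) * (u s + 2 * φ s) + u' s * (u' s + 2 * φ' s)) +
          (φ' s ^ 2 - q s * φ s ^ 2)) := by
        unfold secondVariation
        congr 1 with s
        ring
    _ = (u' b * (u b + 2 * φ b) - u' a * (u a + 2 * φ a)) + secondVariation q φ φ' a b := by
        rw [intervalIntegral.integral_add hint (intervalIntegrable_secondVariation hq hφ_cont hφ'),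
          intervalIntegral.integral_eq_sub_of_hasDerivAt hderiv hint, secondVariation]
    _ = _ := by ring

lemma exists_secondVariation_add_const_mul_neg (hu : IsJacobiField q u u' (uIcc a b))
    (hq : IntervalIntegrable q volume a b) (hφ : ∀ s ∈ uIcc a b, HasDerivAt φ (φ' s) s)
    (hφ' : ContinuousOn φ' (uIcc a b)) (hboundary : u' b * u b - u' a * u a ≤ 0)
    (hφ_neg : u' b * φ b - u' a * φ a < 0) :
    ∃ ε : ℝ, secondVariation q (fun s ↦ u s + ε * φ s) (fun s ↦ u' s + ε * φ' s) a b < 0 := by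
  obtain ⟨ε, hε⟩ := exists_two_mul_add_sq_mul_neg hφ_neg (secondVariation q φ φ' a b)
  refine ⟨ε, ?_⟩
  rw [hu.secondVariation_add hq (fun s hs ↦ (hφ s hs).const_mul ε) (hφ'.const_mul ε),
    secondVariation_const_mul]
  linarith

end IsJacobiField

lemma isJacobiField_velocity {V θ θ' : ℝ → ℝ} {S : Set ℝ} (hV : Differentiable ℝ (deriv V))
    (hθ : ∀ s ∈ S, HasDerivAt θ (θ' s) s) (hθ' : ∀ s ∈ S, HasDerivAt θ' (-deriv V (θ s)) s) :
    IsJacobiField (fun s ↦ deriv (deriv V) (θ s)) θ' (fun s ↦ -deriv V (θ s)) S where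
  hasDerivAt := hθ'
  hasDerivAt_deriv s hs := ((hV (θ s)).hasDerivAt.comp s (hθ s hs)).neg

theorem stmt_16_general {q u u' : ℝ → ℝ} {a b : ℝ} (hab : a < b)
    (hq : IntervalIntegrable q volume a b) (hu : IsJacobiField q u u' (Icc a b))
    (hu' : u' a ≠ 0 ∨ u' b ≠ 0) (hboundary : u' b * u b - u' a * u a ≤ 0) :
    ∃ τ τ' : ℝ → ℝ,
      (∀ s ∈ Icc a b, HasDerivAt τ (τ' s) s) ∧
      ContinuousOn τ' (Icc a b) ∧
      (∃ s ∈ Icc a b, τ s ≠ 0) ∧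
      τ' a = 0 ∧ τ' b = 0 ∧
      secondVariation q τ τ' a b < 0 := by
  let ψ : ℝ → ℝ := fun s ↦ u' a * (b - s) - u' b * (s - a)
  have hψ (s : ℝ) : HasDerivAt ψ (-u' a - u' b) s :=
    ((((hasDerivAt_id s).const_sub b).const_mul (u' a)).sub
      (((hasDerivAt_id s).sub_const a).const_mul (u' b))).congr_deriv (by ring)
  have hψ_neg : u' b * ψ b - u' a * ψ a < 0 := by
    have hpos : 0 < u' a ^ 2 + u' b ^ 2 := by rcases hu' with h | h <;> positivity
    calc u' b * ψ b - u' a * ψ a = -((u' a ^ 2 + u' b ^ 2) * (b - a)) := by simp only [ψ]; ring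
      _ < 0 := neg_neg_of_pos (mul_pos hpos (sub_pos.2 hab))
  obtain ⟨ε, hε⟩ := IsJacobiField.exists_secondVariation_add_const_mul_neg
    (by rwa [uIcc_of_le hab.le]) hq (fun s _ ↦ hψ s) continuousOn_const hboundary hψ_neg
  obtain ⟨τ, τ', hτ, hτ'_cont, hτ'a, hτ'b, hneg⟩ := exists_neumann_secondVariation_neg hab hq
    (fun s hs ↦ (hu.hasDerivAt s hs).add ((hψ s).const_mul ε))
    ((HasDerivAt.continuousOn hu.hasDerivAt_deriv).add continuousOn_const) hε
  exact ⟨τ, τ', hτ, hτ'_cont, exists_ne_zero_of_secondVariation_neg hab.le hneg, hτ'a, hτ'b, hneg⟩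

theorem stmt_16 (a b : ℝ) (hab : a < b) (V : ℝ → ℝ) (hV : ContDiff ℝ 2 V)
    (θ θ' θ'' : ℝ → ℝ)
    (hθ1 : ∀ s ∈ Set.Icc a b, HasDerivAt θ (θ' s) s)
    (hθ2 : ∀ s ∈ Set.Icc a b, HasDerivAt θ' (θ'' s) s)
    (hθc : ContinuousOn θ'' (Set.Icc a b))
    (hEL : ∀ s ∈ Set.Icc a b, θ'' s + deriv V (θ s) = 0)
    (hVa : deriv V (θ a) ≠ 0) (hVb : deriv V (θ b) ≠ 0)
    (hβ : θ' a * deriv V (θ a) - θ' b * deriv V (θ b) ≤ 0) :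
    ∃ τ τ' : ℝ → ℝ,
      (∀ s ∈ Set.Icc a b, HasDerivAt τ (τ' s) s) ∧
      ContinuousOn τ' (Set.Icc a b) ∧
      (∃ s ∈ Set.Icc a b, τ s ≠ 0) ∧
      τ' a = 0 ∧ τ' b = 0 ∧
      (∫ s in a..b, (τ' s ^ 2 - deriv (deriv V) (θ s) * τ s ^ 2)) < 0 := by
  have hV1 : ContDiff ℝ 1 (deriv V) := hV.iterate_deriv' 1 1
  have hV2 : Continuous (deriv (deriv V)) := hV1.continuous_deriv_one
  have hθ_ode : ∀ s ∈ Icc a b, HasDerivAt θ' (-deriv V (θ s)) s := fun s hs ↦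
    eq_neg_of_add_eq_zero_left (hEL s hs) ▸ hθ2 s hs
  have hq : IntervalIntegrable (fun s ↦ deriv (deriv V) (θ s)) volume a b :=
    (hV2.comp_continuousOn (HasDerivAt.continuousOn hθ1)).intervalIntegrable_of_Icc hab.le
  exact stmt_16_general hab hq
    (isJacobiField_velocity (hV1.differentiable one_ne_zero) hθ1 hθ_ode)
    (Or.inl (neg_ne_zero.2 hVa)) (by linarith)
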